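/- arXiv:1805.00715 — 3 statements merged into one kernel-verified Lean document; each statement's English description precedes it below -/
import Mathlib

section
/- Let H be a real inner product space, let V ⊆ W be complete subspaces of H with orthogonal projections P_V and P_W, let u ∈ H, and let 0 ≤ q < 1. If the reliability bound ‖u − P_V u‖ ≤ (1 − q²)^{−1/2} · ‖P_W u − P_V u‖ holds, then the saturation assumption ‖u − P_W u‖ ≤ q·‖u − P_V u‖ holds. Together with the converse implication, reliability with constant (1 − q²)^{−1/2} is equivalent to saturation with constant q. -/
/-- Reliability with constant `(1 - q²)^(-1/2)` is equivalent to saturation with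
constant `q`: in particular the reliability bound implies the saturation assumption. -/
theorem reliability_iff_saturation
    {H : Type*} [NormedAddCommGroup H] [InnerProductSpace ℝ H]
    (V W : Submodule ℝ H) [CompleteSpace V] [CompleteSpace W]
    (hVW : V ≤ W) (u : H) (q : ℝ) (hq0 : 0 ≤ q) (hq1 : q < 1) :
    (‖u - (Submodule.orthogonalProjectionOnto V u : H)‖
        ≤ (1 - q ^ 2) ^ (-(1 / 2) : ℝ)
          * ‖(Submodule.orthogonalProjectionOnto W u : H) - (Submodule.orthogonalProjectionOnto V u : H)‖)
      ↔ ‖u - (Submodule.orthogonalProjectionOnto W u : H)‖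
          ≤ q * ‖u - (Submodule.orthogonalProjectionOnto V u : H)‖ := by
  have horth : inner ℝ (u - (Submodule.orthogonalProjectionOnto W u : H))
      ((Submodule.orthogonalProjectionOnto W u : H)
        - (Submodule.orthogonalProjectionOnto V u : H)) = 0 :=
    Submodule.starProjection_inner_eq_zero (K := W) u _
      (W.sub_mem (Submodule.coe_mem _) (hVW (Submodule.coe_mem _)))
  have hpyth := norm_add_sq_eq_norm_sq_add_norm_sq_of_inner_eq_zero _ _ horth
  rw [sub_add_sub_cancel] at hpyth
  set a := ‖u - (Submodule.orthogonalProjectionOnto V u : H)‖ with ha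
  set b := ‖u - (Submodule.orthogonalProjectionOnto W u : H)‖ with hb
  set c := ‖(Submodule.orthogonalProjectionOnto W u : H)
        - (Submodule.orthogonalProjectionOnto V u : H)‖ with hc
  have ha0 : 0 ≤ a := norm_nonneg _
  have hb0 : 0 ≤ b := norm_nonneg _
  have hc0 : 0 ≤ c := norm_nonneg _
  have hpos : 0 < 1 - q ^ 2 := by nlinarith
  have hs : 0 < √(1 - q ^ 2) := Real.sqrt_pos.mpr hpos
  have hs2 : √(1 - q ^ 2) ^ 2 = 1 - q ^ 2 := Real.sq_sqrt hpos.le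
  rw [Real.rpow_neg hpos.le, ← Real.sqrt_eq_rpow, le_inv_mul_iff₀ hs,
    ← sq_le_sq₀ (mul_nonneg hs.le ha0) hc0, ← sq_le_sq₀ hb0 (mul_nonneg hq0 ha0),
    mul_pow, mul_pow, hs2]
  constructor <;> intro h <;> nlinarith
end

section
/- Let (a_ℓ)_{ℓ∈ℕ} and (b_ℓ)_{ℓ∈ℕ} be sequences of nonnegative real numbers, let 0 ≤ κ < 1 and C₁, C₂ ≥ 0, and suppose that (estimator reduction) a_{ℓ+1}² ≤ κ·a_ℓ² + C₁·b_ℓ² for all ℓ, and (general quasi-orthogonality) ∑_{j=ℓ}^{∞} b_j² ≤ C₂·a_ℓ² for all ℓ. Then for every ℓ the series ∑_{j=ℓ}^{∞} a_j² converges and satisfies ∑_{j=ℓ}^{∞} a_j² ≤ ((1 + C₁·C₂)/(1 − κ))·a_ℓ². -/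
/-- Estimator reduction plus general quasi-orthogonality imply uniform tail-sum
domination: `∑_{j=ℓ}^{∞} a_j² ≤ ((1 + C₁ C₂)/(1 - κ)) a_ℓ²`. -/
theorem tail_sum_domination_of_reduction
    (a b : ℕ → ℝ) (ha : ∀ ℓ, 0 ≤ a ℓ) (hb : ∀ ℓ, 0 ≤ b ℓ)
    (κ C₁ C₂ : ℝ) (hκ0 : 0 ≤ κ) (hκ1 : κ < 1) (hC₁ : 0 ≤ C₁) (hC₂ : 0 ≤ C₂)
    (hred : ∀ ℓ, (a (ℓ + 1)) ^ 2 ≤ κ * (a ℓ) ^ 2 + C₁ * (b ℓ) ^ 2)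
    (hbsum : Summable (fun j : ℕ => (b j) ^ 2))
    (hquasi : ∀ ℓ, ∑' j : ℕ, (b (ℓ + j)) ^ 2 ≤ C₂ * (a ℓ) ^ 2) :
    ∀ ℓ, Summable (fun j : ℕ => (a (ℓ + j)) ^ 2)
      ∧ ∑' j : ℕ, (a (ℓ + j)) ^ 2 ≤ ((1 + C₁ * C₂) / (1 - κ)) * (a ℓ) ^ 2 := by
  intro ℓ
  have hpos : 0 < 1 - κ := by linarith
  have hbs : Summable (fun j : ℕ => (b (ℓ + j)) ^ 2) :=
    hbsum.comp_injective (add_right_injective ℓ)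
  have key : ∀ n : ℕ, (1 - κ) * ∑ j ∈ Finset.range n, (a (ℓ + j)) ^ 2 + (a (ℓ + n)) ^ 2
      ≤ (a ℓ) ^ 2 + C₁ * ∑ j ∈ Finset.range n, (b (ℓ + j)) ^ 2 := by
    intro n
    induction n with
    | zero => simp
    | succ n ih =>
      rw [Finset.sum_range_succ, Finset.sum_range_succ]
      have h := hred (ℓ + n)
      rw [add_assoc] at h
      linarith
  have bound : ∀ n : ℕ, ∑ j ∈ Finset.range n, (a (ℓ + j)) ^ 2
      ≤ ((1 + C₁ * C₂) / (1 - κ)) * (a ℓ) ^ 2 := by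
    intro n
    have h1 : ∑ j ∈ Finset.range n, (b (ℓ + j)) ^ 2 ≤ C₂ * (a ℓ) ^ 2 :=
      (hbs.sum_le_tsum _ (fun _ _ => sq_nonneg _)).trans (hquasi ℓ)
    have h2 := mul_le_mul_of_nonneg_left h1 hC₁
    rw [div_mul_eq_mul_div, le_div_iff₀ hpos]
    linarith [key n, sq_nonneg (a (ℓ + n))]
  exact ⟨summable_of_sum_range_le (fun _ => sq_nonneg _) bound,
    Real.tsum_le_of_sum_range_le (fun _ => sq_nonneg _) bound⟩
end

section
/- Let (a_ℓ)_{ℓ∈ℕ} and (b_ℓ)_{ℓ∈ℕ} be sequences of nonnegative real numbers, let 0 ≤ κ < 1 and C₁, C₂ ≥ 0, and suppose that a_{ℓ+1}² ≤ κ·a_ℓ² + C₁·b_ℓ² for all ℓ, and ∑_{j=ℓ}^{∞} b_j² ≤ C₂·a_ℓ² for all ℓ. Then there exist constants C_lin ≥ 1 and 0 < q < 1 such that a_{ℓ+n} ≤ C_lin·qⁿ·a_ℓ for all ℓ, n ∈ ℕ. -/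
/-- Abstract linear convergence: estimator reduction together with general
quasi-orthogonality imply linear convergence `a_{ℓ+n} ≤ C_lin qⁿ a_ℓ`. -/
theorem linear_convergence_of_reduction_and_quasiorthogonality
    (a b : ℕ → ℝ) (ha : ∀ ℓ, 0 ≤ a ℓ) (hb : ∀ ℓ, 0 ≤ b ℓ)
    (κ C₁ C₂ : ℝ) (hκ0 : 0 ≤ κ) (hκ1 : κ < 1) (hC₁ : 0 ≤ C₁) (hC₂ : 0 ≤ C₂)
    (hred : ∀ ℓ, (a (ℓ + 1)) ^ 2 ≤ κ * (a ℓ) ^ 2 + C₁ * (b ℓ) ^ 2)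
    (hbsum : Summable (fun j : ℕ => (b j) ^ 2))
    (hquasi : ∀ ℓ, ∑' j : ℕ, (b (ℓ + j)) ^ 2 ≤ C₂ * (a ℓ) ^ 2) :
    ∃ Clin q : ℝ, 1 ≤ Clin ∧ 0 < q ∧ q < 1 ∧
      ∀ ℓ n : ℕ, a (ℓ + n) ≤ Clin * q ^ n * a ℓ := by
  set T : ℕ → ℝ := fun ℓ => ∑' j : ℕ, (b (ℓ + j)) ^ 2 with hT
  have hT0 : ∀ ℓ, 0 ≤ T ℓ := fun ℓ => tsum_nonneg (fun j => sq_nonneg _)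
  have hTs : ∀ ℓ, T ℓ = (b ℓ) ^ 2 + T (ℓ + 1) := by
    intro ℓ
    have hs : Summable (fun j : ℕ => (b (ℓ + j)) ^ 2) := by
      have h := (summable_nat_add_iff (f := fun j : ℕ => (b j) ^ 2) ℓ).2 hbsum
      simpa [add_comm] using h
    have h := hs.tsum_eq_zero_add
    simp only [hT]
    rw [h]
    have e : ∀ j : ℕ, ℓ + (j + 1) = ℓ + 1 + j := fun j => by omega
    rw [add_zero]
    congr 1
    exact tsum_congr (fun j => by rw [e j])
  have hTq : ∀ ℓ, T ℓ ≤ C₂ * (a ℓ) ^ 2 := hquasi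
  clear_value T
  obtain ⟨K, hK⟩ : ∃ K, K = 1 + C₁ * C₂ := ⟨_, rfl⟩
  have hK1 : 1 ≤ K := by rw [hK]; nlinarith [mul_nonneg hC₁ hC₂]
  have hKpos : 0 < K := by linarith
  obtain ⟨d, hd⟩ : ∃ d, d = (1 - κ) / (2 * K) := ⟨_, rfl⟩
  have hd0 : 0 < d := by rw [hd]; apply div_pos <;> linarith
  have hdK : d * K = (1 - κ) / 2 := by rw [hd]; field_simp
  have hd1 : d < 1 := by nlinarith
  have hup : ∀ ℓ, (a ℓ) ^ 2 + C₁ * T ℓ ≤ K * (a ℓ) ^ 2 := by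
    intro ℓ
    have := mul_le_mul_of_nonneg_left (hTq ℓ) hC₁
    rw [hK]; linarith
  have hstep : ∀ ℓ, (a (ℓ + 1)) ^ 2 + C₁ * T (ℓ + 1)
      ≤ (1 - d) * ((a ℓ) ^ 2 + C₁ * T ℓ) := by
    intro ℓ
    have h1 := hred ℓ
    have h2 : C₁ * T ℓ = C₁ * (b ℓ) ^ 2 + C₁ * T (ℓ + 1) := by rw [hTs ℓ]; ring
    have h3 := mul_le_mul_of_nonneg_left (hup ℓ) hd0.le
    have h4 : d * (K * (a ℓ) ^ 2) = (1 - κ) / 2 * (a ℓ) ^ 2 := by rw [← hdK]; ring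
    have h5 : 0 ≤ (1 - κ) * (a ℓ) ^ 2 := mul_nonneg (by linarith) (sq_nonneg _)
    linarith
  have hiter : ∀ ℓ n, (a (ℓ + n)) ^ 2 + C₁ * T (ℓ + n)
      ≤ (1 - d) ^ n * ((a ℓ) ^ 2 + C₁ * T ℓ) := by
    intro ℓ n
    induction n with
    | zero => simp
    | succ n ih =>
      have h1 := hstep (ℓ + n)
      have h2 := mul_le_mul_of_nonneg_left ih (by linarith : 0 ≤ 1 - d)
      rw [pow_succ (1 - d) n, ← add_assoc]
      linarith
  refine ⟨K, √(1 - d), hK1, Real.sqrt_pos.2 (by linarith), ?_, ?_⟩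
  · rw [Real.sqrt_lt' one_pos]; linarith
  · intro ℓ n
    have hp : 0 ≤ (1 - d) ^ n := pow_nonneg (by linarith) n
    have hsq : (√(1 - d) ^ n) ^ 2 = (1 - d) ^ n := by
      rw [← pow_mul, mul_comm, pow_mul, Real.sq_sqrt (by linarith)]
    refine (pow_le_pow_iff_left₀ (ha _) ?_ two_ne_zero).1 ?_
    rotate_left
    · rw [mul_pow, mul_pow, hsq]
      have h1 := hiter ℓ n
      have h2 := mul_le_mul_of_nonneg_left (hup ℓ) hp
      have h3 := mul_nonneg hC₁ (hT0 (ℓ + n))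
      have h4 : 0 ≤ (K ^ 2 - K) * ((1 - d) ^ n * (a ℓ) ^ 2) :=
        mul_nonneg (by nlinarith) (mul_nonneg hp (sq_nonneg _))
      linarith
    · have := ha ℓ
      positivity
end
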